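/- Let G be a weighted graph with k vertices and h connected components, where h < k. Then G has a 2-way split whose weight is at most 2·w(E)/(k − h + 1), where E is the edge set of G. -/

import Mathlib

open Finset

namespace KCut

open scoped Classical

/-- Number of connected components of a graph. -/
noncomputable def numComp {V : Type*} (G : SimpleGraph V) : ℕ :=
  Nat.card G.ConnectedComponent

/-- `S` is an `h`-way split of `G`: a set of edges of `G` whose removal increases the
number of connected components by `h - 1`. -/
def IsSplit {V : Type*} (G : SimpleGraph V) (S : Finset (Sym2 V)) (h : ℕ) : Prop :=
  ↑S ⊆ G.edgeSet ∧ numComp (G.deleteEdges ↑S) = (h - 1) + numComp G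

/-- Total weight of a finite set of edges. -/
noncomputable def weight {V : Type*} (w : Sym2 V → ℝ) (S : Finset (Sym2 V)) : ℝ :=
  ∑ e ∈ S, w e

/-- Density of an `h`-way split: its weight divided by `h - 1`. -/
noncomputable def density {V : Type*} (w : Sym2 V → ℝ) (S : Finset (Sym2 V)) (h : ℕ) : ℝ :=
  weight w S / ((h : ℝ) - 1)

/-- `β(G) = |E|/|V|`. -/
noncomputable def beta {V : Type*} [Fintype V] (G : SimpleGraph V) [Fintype G.edgeSet] : ℝ :=
  (G.edgeFinset.card : ℝ) / (Fintype.card V : ℝ)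

/-- A matching: a set of pairwise vertex-disjoint edges of `G`. -/
def IsMatchingSet {V : Type*} (G : SimpleGraph V) (M : Finset (Sym2 V)) : Prop :=
  ↑M ⊆ G.edgeSet ∧ ∀ e ∈ M, ∀ f ∈ M, e ≠ f → ∀ v : V, v ∈ e → v ∉ f

/-- A minimum `h`-way split: an `h`-way split of minimum total weight. -/
def IsMinSplit {V : Type*} (G : SimpleGraph V) (w : Sym2 V → ℝ)
    (S : Finset (Sym2 V)) (h : ℕ) : Prop :=
  IsSplit G S h ∧ ∀ T : Finset (Sym2 V), IsSplit G T h → weight w S ≤ weight w T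

/-- An `h`-way split `S` is sparse if no split of separation degree at most `h`
has smaller density. -/
def IsSparse {V : Type*} (G : SimpleGraph V) (w : Sym2 V → ℝ)
    (S : Finset (Sym2 V)) (h : ℕ) : Prop :=
  ∀ h' : ℕ, h' ≤ h → 2 ≤ h' → ∀ S' : Finset (Sym2 V), IsSplit G S' h' →
    density w S h ≤ density w S' h'

/-! Deleting the star of a non-isolated vertex increases the number of components, and the weight of
the star is a weighted degree. By the weighted handshake identity the lightest of these stars weighs
at most `2 w(E) / s`, where `s` is the number of non-isolated vertices. Each isolated vertex is a
component and there is at least one more component, so `s ≥ k - h + 1`. Deleting the edges of the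
lightest star one at a time creates at most one component per step, so some subset of it is exactly
a 2-way split. -/

theorem exists_subset_eq_of_insert_le_add_one {α : Type*} [DecidableEq α] {f : Finset α → ℕ}
    (hf : ∀ a s, f (insert a s) ≤ f s + 1) {n : ℕ} {t : Finset α} (h₀ : f ∅ ≤ n) (ht : n ≤ f t) :
    ∃ s ⊆ t, f s = n := by
  induction t using Finset.induction_on with
  | empty => exact ⟨∅, subset_rfl, h₀.antisymm ht⟩
  | insert a t _ ih =>
    rcases le_or_gt n (f t) with hn | hn
    · obtain ⟨s, hst, hs⟩ := ih hn
      exact ⟨s, hst.trans (subset_insert a t), hs⟩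
    · exact ⟨insert a t, subset_rfl, ((hf a t).trans hn).antisymm ht⟩

theorem weight_le_weight_of_subset {V : Type*} {w : Sym2 V → ℝ} {S T : Finset (Sym2 V)}
    (hST : S ⊆ T) (hw : ∀ e ∈ T, 0 ≤ w e) : weight w S ≤ weight w T :=
  sum_le_sum_of_subset_of_nonneg hST fun e he _ ↦ hw e he

section Components

variable {V : Type*} {G H : SimpleGraph V} {a b u v x y : V}

theorem eq_of_isIsolated_of_reachable (hx : G.IsIsolated x) (hxy : G.Reachable x y) : x = y := by
  obtain ⟨_ | ⟨hadj, _⟩⟩ := hxy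
  · rfl
  · exact (hx _ hadj).elim

theorem numComp_bot : numComp (⊥ : SimpleGraph V) = Nat.card V := by
  refine (Nat.card_eq_of_bijective _ ⟨fun x y hxy ↦ ?_, Quot.mk_surjective⟩).symm
  exact eq_of_isIsolated_of_reachable .bot (SimpleGraph.ConnectedComponent.exact hxy)

theorem numComp_lt_numComp_of_not_reachable [Finite V] (hle : H ≤ G) (hG : G.Reachable u v)
    (hH : ¬ H.Reachable u v) : numComp G < numComp H := by
  refine (SimpleGraph.ConnectedComponent.card_le_card_of_le hle).lt_of_ne fun hcard ↦ hH ?_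
  have hbij := (Nat.bijective_iff_surjective_and_card _).2
    ⟨SimpleGraph.ConnectedComponent.surjective_map_ofLE hle, hcard.symm⟩
  exact SimpleGraph.ConnectedComponent.exact (hbij.1 (SimpleGraph.ConnectedComponent.sound hG))

theorem numComp_lt_numComp_deleteIncidenceSet [Finite V] (hv : v ∈ G.support) :
    numComp G < numComp (G.deleteIncidenceSet v) := by
  obtain ⟨u, hvu⟩ := hv
  have hiso : (G.deleteIncidenceSet v).IsIsolated v := fun _ h ↦
    (SimpleGraph.deleteIncidenceSet_adj.1 h).2.1 rfl
  exact numComp_lt_numComp_of_not_reachable (G.deleteIncidenceSet_le v) hvu.reachable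
    fun h ↦ hvu.ne (eq_of_isIsolated_of_reachable hiso h)

theorem reachable_deleteEdges_singleton (hxy : G.Reachable x y)
    (hx : ¬ (G.deleteEdges {s(a, b)}).Reachable x b)
    (hy : ¬ (G.deleteEdges {s(a, b)}).Reachable y b) :
    (G.deleteEdges {s(a, b)}).Reachable x y := by
  obtain ⟨p, hp⟩ := hxy.exists_isPath
  exact SimpleGraph.reachable_deleteEdges_iff_exists_walk.2
    ⟨p, hp.isTrail.not_mem_edges_of_not_reachable hx hy⟩

/- Away from the component of one endpoint of `e`, no two components of `G - e` are merged by
putting `e` back. -/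
theorem numComp_deleteEdges_singleton_le [Finite V] (e : Sym2 V) :
    numComp (G.deleteEdges {e}) ≤ numComp G + 1 := by
  induction e with
  | h a b =>
    set G' := G.deleteEdges {s(a, b)}
    let merge : G'.ConnectedComponent → G.ConnectedComponent :=
      SimpleGraph.ConnectedComponent.map (.ofLE (SimpleGraph.deleteEdges_le _))
    have hinj : Set.InjOn merge {G'.connectedComponentMk b}ᶜ := by
      rintro ⟨x⟩ hx ⟨y⟩ hy hxy
      exact SimpleGraph.ConnectedComponent.sound <| reachable_deleteEdges_singleton
        (SimpleGraph.ConnectedComponent.exact hxy)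
        (fun h ↦ hx (SimpleGraph.ConnectedComponent.sound h))
        (fun h ↦ hy (SimpleGraph.ConnectedComponent.sound h))
    calc numComp G'
        = ({G'.connectedComponentMk b}ᶜ : Set G'.ConnectedComponent).ncard + 1 := by
          rw [numComp, ← Set.ncard_add_ncard_compl {G'.connectedComponentMk b},
            Set.ncard_singleton, add_comm]
      _ ≤ numComp G + 1 := by
          gcongr
          rw [numComp, ← Set.ncard_univ]
          exact Set.ncard_le_ncard_of_injOn merge (fun _ _ ↦ Set.mem_univ _) hinj

theorem card_add_one_le_ncard_support_add_numComp [Finite V] (hG : G ≠ ⊥) :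
    Nat.card V + 1 ≤ G.support.ncard + numComp G := by
  obtain ⟨v, hv⟩ : G.support.Nonempty :=
    Set.nonempty_iff_ne_empty.2 (G.support_eq_bot_iff.not.2 hG)
  have hinj : Set.InjOn G.connectedComponentMk (insert v G.supportᶜ) := by
    have heq {x y} (hx : x ∉ G.support) (hxy : G.Reachable x y) : x = y :=
      eq_of_isIsolated_of_reachable (G.notMem_support_iff_isIsolated.1 hx) hxy
    rintro x (rfl | hx) y (rfl | hy) hxy
    · rfl
    · exact (heq hy (SimpleGraph.ConnectedComponent.exact hxy).symm).symm
    · exact heq hx (SimpleGraph.ConnectedComponent.exact hxy)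
    · exact heq hx (SimpleGraph.ConnectedComponent.exact hxy)
  calc Nat.card V + 1 = G.support.ncard + (insert v G.supportᶜ).ncard := by
        rw [Set.ncard_insert_of_notMem (Set.notMem_compl_iff.2 hv), ← add_assoc,
          Set.ncard_add_ncard_compl]
    _ ≤ G.support.ncard + numComp G := by
        gcongr
        rw [numComp, ← Set.ncard_univ]
        exact Set.ncard_le_ncard_of_injOn _ (fun _ _ ↦ Set.mem_univ _) hinj

end Components

section Splits

variable {V : Type*} {G : SimpleGraph V}

theorem exists_subset_isSplit [Finite V] {T : Finset (Sym2 V)} {h : ℕ} (hTG : ↑T ⊆ G.edgeSet)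
    (hT : (h - 1) + numComp G ≤ numComp (G.deleteEdges ↑T)) : ∃ S ⊆ T, IsSplit G S h := by
  let f (S : Finset (Sym2 V)) : ℕ := numComp (G.deleteEdges ↑S)
  have hempty : f ∅ ≤ (h - 1) + numComp G := by simp [f]
  have hinsert (e : Sym2 V) (S : Finset (Sym2 V)) : f (insert e S) ≤ f S + 1 := by
    simp only [f]
    rw [coe_insert, Set.insert_eq, Set.union_comm, ← SimpleGraph.deleteEdges_deleteEdges]
    exact numComp_deleteEdges_singleton_le e
  obtain ⟨S, hST, hS⟩ := exists_subset_eq_of_insert_le_add_one hinsert hempty hT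
  exact ⟨S, hST, (coe_subset.2 hST).trans hTG, hS⟩

variable [Fintype V] [DecidableRel G.Adj]

theorem exists_subset_incidenceFinset_isSplit_two [DecidableEq V] {v : V} (hv : v ∈ G.support) :
    ∃ S ⊆ G.incidenceFinset v, IsSplit G S 2 := by
  refine exists_subset_isSplit ?_ ?_
  · simpa using G.incidenceSet_subset v
  · rw [G.coe_incidenceFinset, Nat.add_comm]
    exact numComp_lt_numComp_deleteIncidenceSet hv

variable (G) (w : Sym2 V → ℝ)

theorem sum_weight_incidenceFinset [DecidableEq V] :
    ∑ v, weight w (G.incidenceFinset v) = 2 * weight w G.edgeFinset := by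
  have hends {e : Sym2 V} (he : e ∈ G.edgeFinset) : #{v | v ∈ e} = 2 := by
    rw [← Sym2.card_toFinset_of_not_isDiag e
      (G.not_isDiag_of_mem_edgeSet (SimpleGraph.mem_edgeFinset.1 he))]
    congr 1
    ext; simp
  calc ∑ v, weight w (G.incidenceFinset v)
      = ∑ e ∈ G.edgeFinset, ∑ v with v ∈ e, w e := by
        simp_rw [weight, G.incidenceFinset_eq_filter, sum_filter]
        exact sum_comm
    _ = ∑ e ∈ G.edgeFinset, 2 * w e := sum_congr rfl fun e he ↦ by
        rw [sum_const, hends he, nsmul_eq_mul, Nat.cast_ofNat]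
    _ = 2 * weight w G.edgeFinset := (mul_sum ..).symm

theorem sum_support_weight_incidenceFinset [DecidableEq V] :
    ∑ v ∈ G.support.toFinset, weight w (G.incidenceFinset v) = 2 * weight w G.edgeFinset := by
  rw [← sum_weight_incidenceFinset]
  refine sum_subset (subset_univ _) fun v _ hv ↦ ?_
  have hdeg : G.degree v = 0 := (G.degree_eq_zero v).2 (by simpa using hv)
  rw [← G.card_incidenceFinset_eq_degree, card_eq_zero] at hdeg
  rw [hdeg, weight, sum_empty]

variable {G}

theorem exists_mem_support_weight_incidenceFinset_le [DecidableEq V] (hG : G ≠ ⊥) :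
    ∃ v ∈ G.support,
      weight w (G.incidenceFinset v) ≤ 2 * weight w G.edgeFinset / G.support.ncard := by
  have hsupp : G.support.toFinset.Nonempty := by
    simpa [Set.nonempty_iff_ne_empty] using hG
  have hcard : (G.support.ncard : ℝ) ≠ 0 := by
    rw [Set.ncard_eq_toFinset_card']
    exact_mod_cast hsupp.card_pos.ne'
  obtain ⟨v, hv, hle⟩ := exists_le_of_sum_le hsupp (f := fun v ↦ weight w (G.incidenceFinset v))
    (g := fun _ ↦ 2 * weight w G.edgeFinset / G.support.ncard) <| by
      rw [sum_support_weight_incidenceFinset, sum_const, nsmul_eq_mul,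
        ← Set.ncard_eq_toFinset_card', mul_div_cancel₀ _ hcard]
  exact ⟨v, Set.mem_toFinset.1 hv, hle⟩

theorem exists_isSplit_two_weight_le_div_ncard_support (hG : G ≠ ⊥)
    (hw : ∀ e ∈ G.edgeSet, 0 ≤ w e) :
    ∃ S, IsSplit G S 2 ∧ weight w S ≤ 2 * weight w G.edgeFinset / G.support.ncard := by
  obtain ⟨v, hv, hstar⟩ := exists_mem_support_weight_incidenceFinset_le w hG
  obtain ⟨S, hSv, hS⟩ := exists_subset_incidenceFinset_isSplit_two hv
  refine ⟨S, hS, (weight_le_weight_of_subset hSv fun e he ↦ hw e ?_).trans hstar⟩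
  exact ((G.mem_incidenceFinset v e).1 he).1

end Splits

theorem exists_two_way_split_of_disconnected
    {V : Type*} [Fintype V] [DecidableEq V]
    (G : SimpleGraph V) [DecidableRel G.Adj]
    (w : Sym2 V → ℝ) (hw : ∀ e ∈ G.edgeSet, 0 < w e)
    (hh : numComp G < Fintype.card V) :
    ∃ S : Finset (Sym2 V), IsSplit G S 2 ∧
      weight w S ≤ 2 * weight w G.edgeFinset /
        ((Fintype.card V : ℝ) - (numComp G : ℝ) + 1) := by
  have hG : G ≠ ⊥ := by
    rintro rfl
    rw [numComp_bot, Nat.card_eq_fintype_card] at hh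
    exact hh.false
  obtain ⟨S, hS, hSw⟩ :=
    exists_isSplit_two_weight_le_div_ncard_support w hG fun e he ↦ (hw e he).le
  refine ⟨S, hS, hSw.trans ?_⟩
  have hE : 0 ≤ weight w G.edgeFinset :=
    sum_nonneg fun e he ↦ (hw e (SimpleGraph.mem_edgeFinset.1 he)).le
  have hcard : (Fintype.card V : ℝ) + 1 ≤ G.support.ncard + numComp G := by
    exact_mod_cast Nat.card_eq_fintype_card (α := V) ▸ card_add_one_le_ncard_support_add_numComp hG
  have hpos : (numComp G : ℝ) < Fintype.card V := Nat.cast_lt.2 hh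
  gcongr
  all_goals linarith

end KCut
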